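/- Let (X,d,f) be a TDS and φ ∈ C(X,ℝ) with φ > 0. Let K ⊆ X be a non-empty compact subset. Then for every α ≥ 0, dim_BS^α(f,K,φ) = sup{P_μ^α(f,φ) : μ a Borel probability measure on X with μ(K) = 1}. -/

import Mathlib

open Filter Set MeasureTheory ENNReal
open scoped Classical NNReal

noncomputable section

namespace AlphaBS

variable {X : Type*}

/-- Birkhoff sum `S_n φ (x) = ∑_{j<n} φ(f^j x)`. -/
def birk (f : X → X) (φ : X → ℝ) (n : ℕ) (x : X) : ℝ :=
  ∑ j ∈ Finset.range n, φ (f^[j] x)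

/-- The α-Bowen ball `B_n^α(x,ε) = {y : d_n^α(x,y) < ε}`, where
`d_n^α(x,y) = max_{0 ≤ i ≤ n-1} e^{αi} d(f^i x, f^i y)`, w.r.t. an explicit distance `d`. -/
def bowenBall (d : X → X → ℝ) (f : X → X) (α : ℝ) (n : ℕ) (x : X) (ε : ℝ) : Set X :=
  {y | ∀ i < n, Real.exp (α * i) * d (f^[i] x) (f^[i] y) < ε}

section covers

variable (d : X → X → ℝ) (f : X → X)

/-- `M^α(K,s,ε,n,φ)`: infimum over countable families of α-Bowen balls covering `K`. -/
def Mpre (φ : X → ℝ) (α s ε : ℝ) (N : ℕ) (K : Set X) : ℝ≥0∞ :=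
  ⨅ (c : ℕ → X) (m : ℕ → ℕ) (I : Set ℕ) (_ : I.Nonempty) (_ : ∀ i ∈ I, N ≤ m i)
    (_ : K ⊆ ⋃ i ∈ I, bowenBall d f α (m i) (c i) ε),
    ∑' i : I, ENNReal.ofReal
      (Real.exp (-s * sSup (birk f φ (m i) '' bowenBall d f α (m i) (c i) ε)))

/-- `M^α(K,s,ε,φ) = lim_{n→∞} M^α(K,s,ε,n,φ)` (the quantity is nondecreasing in `n`). -/
def Mlim (φ : X → ℝ) (α s ε : ℝ) (K : Set X) : ℝ≥0∞ := ⨆ N : ℕ, Mpre d f φ α s ε N K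

/-- `M^α(K,ε,φ) = inf {s ≥ 0 : M^α(K,s,ε,φ) = 0}`. -/
def Mcrit (φ : X → ℝ) (α ε : ℝ) (K : Set X) : EReal :=
  ⨅ (s : ℝ) (_ : 0 ≤ s) (_ : Mlim d f φ α s ε K = 0), (s : EReal)

/-- The α-BS dimension `dim_BS^α(f,K,φ) = lim_{ε→0} M^α(K,ε,φ)`
(the quantity is nonincreasing in `ε`). -/
def dimBS (φ : X → ℝ) (α : ℝ) (K : Set X) : EReal :=
  ⨆ (ε : ℝ) (_ : 0 < ε), Mcrit d f φ α ε K

/-- `M^{α,1}(K,s,ε,n,φ)`: the variant with weights `exp(-s·S_{n_i}φ(x_i))` at the centers. -/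
def M1pre (φ : X → ℝ) (α s ε : ℝ) (N : ℕ) (K : Set X) : ℝ≥0∞ :=
  ⨅ (c : ℕ → X) (m : ℕ → ℕ) (I : Set ℕ) (_ : I.Nonempty) (_ : ∀ i ∈ I, N ≤ m i)
    (_ : K ⊆ ⋃ i ∈ I, bowenBall d f α (m i) (c i) ε),
    ∑' i : I, ENNReal.ofReal (Real.exp (-s * birk f φ (m i) (c i)))

def M1lim (φ : X → ℝ) (α s ε : ℝ) (K : Set X) : ℝ≥0∞ := ⨆ N : ℕ, M1pre d f φ α s ε N K

def M1crit (φ : X → ℝ) (α ε : ℝ) (K : Set X) : EReal :=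
  ⨅ (s : ℝ) (_ : 0 ≤ s) (_ : M1lim d f φ α s ε K = 0), (s : EReal)

/-- The modified α-BS dimension `\widetilde{dim}_{BS}^α(f,K,φ)`. -/
def dimBS1 (φ : X → ℝ) (α : ℝ) (K : Set X) : EReal :=
  ⨆ (ε : ℝ) (_ : 0 < ε), M1crit d f φ α ε K

/-- `M^α(K,s,ε,n,1)`: covering quantity with weights `exp(-s n_i)`. -/
def Epre (α s ε : ℝ) (N : ℕ) (K : Set X) : ℝ≥0∞ :=
  ⨅ (c : ℕ → X) (m : ℕ → ℕ) (I : Set ℕ) (_ : I.Nonempty) (_ : ∀ i ∈ I, N ≤ m i)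
    (_ : K ⊆ ⋃ i ∈ I, bowenBall d f α (m i) (c i) ε),
    ∑' i : I, ENNReal.ofReal (Real.exp (-s * (m i : ℝ)))

def Elim (α s ε : ℝ) (K : Set X) : ℝ≥0∞ := ⨆ N : ℕ, Epre d f α s ε N K

def Ecrit (α ε : ℝ) (K : Set X) : EReal :=
  ⨅ (s : ℝ) (_ : 0 ≤ s) (_ : Elim d f α s ε K = 0), (s : EReal)

/-- The α-Bowen topological entropy `h_top^{α,B}(f,K)` (i.e. `dim_BS^α(f,K,1)`,
computed with weights `exp(-s n_i)`). -/
def entB (α : ℝ) (K : Set X) : EReal := ⨆ (ε : ℝ) (_ : 0 < ε), Ecrit d f α ε K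

/-- `ℳ_B^α(K,s,ε,n,h)`: the Pesin pressure covering quantity. -/
def Ppre (h : X → ℝ) (α s ε : ℝ) (N : ℕ) (K : Set X) : ℝ≥0∞ :=
  ⨅ (c : ℕ → X) (m : ℕ → ℕ) (I : Set ℕ) (_ : I.Nonempty) (_ : ∀ i ∈ I, N ≤ m i)
    (_ : K ⊆ ⋃ i ∈ I, bowenBall d f α (m i) (c i) ε),
    ∑' i : I, ENNReal.ofReal
      (Real.exp (-s * (m i : ℝ) + sSup (birk f h (m i) '' bowenBall d f α (m i) (c i) ε)))

def Plim (h : X → ℝ) (α s ε : ℝ) (K : Set X) : ℝ≥0∞ := ⨆ N : ℕ, Ppre d f h α s ε N K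

/-- `ℳ_B^α(K,ε,h) = inf {s ∈ ℝ : ℳ_B^α(K,s,ε,h) = 0}`. -/
def Pcrit (h : X → ℝ) (α ε : ℝ) (K : Set X) : EReal :=
  ⨅ (s : ℝ) (_ : Plim d f h α s ε K = 0), (s : EReal)

/-- The α-Pesin topological pressure `P_B^α(f,K,h)`. -/
def pressureB (h : X → ℝ) (α : ℝ) (K : Set X) : EReal :=
  ⨆ (ε : ℝ) (_ : 0 < ε), Pcrit d f h α ε K

/-- `W^α(K,s,ε,n,φ)`: the weighted covering quantity. -/
def Wpre (φ : X → ℝ) (α s ε : ℝ) (N : ℕ) (K : Set X) : ℝ≥0∞ :=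
  ⨅ (c : ℕ → X) (m : ℕ → ℕ) (w : ℕ → ℝ) (I : Set ℕ) (_ : I.Nonempty)
    (_ : ∀ i ∈ I, N ≤ m i) (_ : ∀ i ∈ I, 0 < w i)
    (_ : ∀ x ∈ K, (1 : ℝ≥0∞) ≤
      ∑' i : I, (bowenBall d f α (m i) (c i) ε).indicator
        (fun _ => ENNReal.ofReal (w i)) x),
    ∑' i : I, ENNReal.ofReal (w i * Real.exp (-s * birk f φ (m i) (c i)))

def Wlim (φ : X → ℝ) (α s ε : ℝ) (K : Set X) : ℝ≥0∞ := ⨆ N : ℕ, Wpre d f φ α s ε N K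

def Wcrit (φ : X → ℝ) (α ε : ℝ) (K : Set X) : EReal :=
  ⨅ (s : ℝ) (_ : 0 ≤ s) (_ : Wlim d f φ α s ε K = 0), (s : EReal)

/-- The weighted α-BS dimension `dim_BS^{α,W}(f,K,φ)`. -/
def dimBSW (φ : X → ℝ) (α : ℝ) (K : Set X) : EReal :=
  ⨆ (ε : ℝ) (_ : 0 < ε), Wcrit d f φ α ε K

/-- `r_n(f,α,X,ε)`: the smallest cardinality of an `(n,α,ε)`-spanning set of `X`. -/
def spanNum (α ε : ℝ) (n : ℕ) : ℕ :=
  sInf {m : ℕ | ∃ E : Finset X, E.card = m ∧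
    ∀ x : X, ∃ y ∈ E, ∀ i < n, Real.exp (α * i) * d (f^[i] y) (f^[i] x) < ε}

/-- `h_top^α(f,X,ε) = limsup_n (1/n) log r_n(f,α,X,ε)`. -/
def htopSpanE (α ε : ℝ) : EReal :=
  limsup (fun n : ℕ => ((Real.log (spanNum d f α ε n) / n : ℝ) : EReal)) atTop

/-- the α-topological entropy `h_top^α(f,X) = lim_{ε→0} h_top^α(f,X,ε)`
(the quantity is nonincreasing in `ε`). -/
def htopSpan (α : ℝ) : EReal := ⨆ (ε : ℝ) (_ : 0 < ε), htopSpanE d f α ε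

/-- `r_n(X, e^{-nε})`: smallest number of ε-neutralized Bowen balls needed to cover `X`. -/
def neutNum (ε : ℝ) (n : ℕ) : ℕ :=
  sInf {m : ℕ | ∃ E : Finset X, E.card = m ∧
    ∀ x : X, ∃ y ∈ E, ∀ j < n, d (f^[j] y) (f^[j] x) < Real.exp (-(n : ℝ) * ε)}

/-- the neutralized ε-topological entropy. -/
def neutEntE (ε : ℝ) : EReal :=
  limsup (fun n : ℕ => ((Real.log (neutNum d f ε n) / n : ℝ) : EReal)) atTop

/-- the neutralized topological entropy `\tilde h_top(f,X) = inf_{ε>0} \tilde h_top(f,X,ε)`. -/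
def neutEnt : EReal := ⨅ (ε : ℝ) (_ : 0 < ε), neutEntE d f ε

end covers

/-- `-log t`, valued in `[0,∞]` for `t ∈ [0,1]`, with `-log 0 = ∞`. -/
def negLog (t : ℝ≥0∞) : ℝ≥0∞ := if t = 0 then ⊤ else ENNReal.ofReal (-Real.log t.toReal)

section measure

variable [MeasurableSpace X]

/-- `P_μ^α(f,x,φ) = lim_{ε→0} liminf_n (-log μ(B_n^α(x,ε)))/S_nφ(x)`. -/
def localBKphi (d : X → X → ℝ) (f : X → X) (φ : X → ℝ) (α : ℝ) (μ : Measure X)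
    (x : X) : ℝ≥0∞ :=
  ⨆ (ε : ℝ) (_ : 0 < ε),
    liminf (fun n : ℕ =>
      negLog (μ (bowenBall d f α n x ε)) / ENNReal.ofReal (birk f φ n x)) atTop

/-- The α-local Brin–Katok entropy `P_μ^α(f,φ) = ∫ P_μ^α(f,x,φ) dμ(x)`. -/
def BKphi (d : X → X → ℝ) (f : X → X) (φ : X → ℝ) (α : ℝ) (μ : Measure X) : ℝ≥0∞ :=
  ∫⁻ x, localBKphi d f φ α μ x ∂μ

/-- `lim_{ε→0} liminf_n (-log μ(B_n^α(x,ε)))/n`. -/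
def localBKn (d : X → X → ℝ) (f : X → X) (α : ℝ) (μ : Measure X) (x : X) : ℝ≥0∞ :=
  ⨆ (ε : ℝ) (_ : 0 < ε),
    liminf (fun n : ℕ => negLog (μ (bowenBall d f α n x ε)) / (n : ℝ≥0∞)) atTop

/-- The lower α-local Brin–Katok entropy `\underline h_μ^{BK}(f,α)`. -/
def BKn (d : X → X → ℝ) (f : X → X) (α : ℝ) (μ : Measure X) : ℝ≥0∞ :=
  ∫⁻ x, localBKn d f α μ x ∂μ

end measure

/-- diameter of a set w.r.t. an explicit distance. -/
def ediamD (d : X → X → ℝ) (U : Set X) : ℝ≥0∞ :=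
  ⨆ (x ∈ U) (y ∈ U), ENNReal.ofReal (d x y)

/-- pre-Hausdorff measure at scale `δ`. -/
def hausPre (d : X → X → ℝ) (s δ : ℝ) (E : Set X) : ℝ≥0∞ :=
  ⨅ (U : ℕ → Set X) (_ : E ⊆ ⋃ i, U i) (_ : ∀ i, ediamD d (U i) ≤ ENNReal.ofReal δ),
    ∑' i, ediamD d (U i) ^ s

/-- `s`-dimensional Hausdorff measure w.r.t. an explicit distance. -/
def hausMeas (d : X → X → ℝ) (s : ℝ) (E : Set X) : ℝ≥0∞ :=
  ⨆ (δ : ℝ) (_ : 0 < δ), hausPre d s δ E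

/-- Hausdorff dimension w.r.t. an explicit distance:
`dim_H(E,d) = inf {s ≥ 0 : H^s(E) = 0}`. -/
def hausDim (d : X → X → ℝ) (E : Set X) : ℝ≥0∞ :=
  ⨅ (s : ℝ≥0) (_ : hausMeas d s E = 0), (s : ℝ≥0∞)

/-- The left shift on `Σ_k^+ = {0,…,k-1}^ℕ`. -/
def shiftMap (k : ℕ) : (ℕ → Fin k) → (ℕ → Fin k) := fun x n => x (n + 1)

/-- The metric `d(x,y) = e^{-n(x,y)}` on `Σ_k^+`, where `n(x,y)` is the least index
at which `x` and `y` differ, and `d(x,x) = 0`. -/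
def shiftDist {k : ℕ} (x y : ℕ → Fin k) : ℝ :=
  if x = y then 0 else Real.exp (-((sInf {n : ℕ | x n ≠ y n} : ℕ) : ℝ))

/-- The subshift of finite type `Σ_A^+` determined by the incidence matrix `A`. -/
def SFT {k : ℕ} (A : Matrix (Fin k) (Fin k) ℝ) : Type :=
  {x : ℕ → Fin k // ∀ n, A (x n) (x (n + 1)) = 1}

/-- The left shift restricted to `Σ_A^+`. -/
def sftShift {k : ℕ} (A : Matrix (Fin k) (Fin k) ℝ) : SFT A → SFT A :=
  fun x => ⟨fun n => x.1 (n + 1), fun n => x.2 (n + 1)⟩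

/-- The metric `d` restricted to `Σ_A^+`. -/
def sftDist {k : ℕ} (A : Matrix (Fin k) (Fin k) ℝ) : SFT A → SFT A → ℝ :=
  fun x y => shiftDist x.1 y.1

end AlphaBS

open AlphaBS

/-!
One inequality is a Frostman argument. Let `0 ≤ c < s` with `M^α(K,s,ε,φ) > 0`, and fix a geometric
sequence `t` with ratio below `1`. Given a fractional cover of `K` by balls `B_n^α(x,ε/3)`, `n ≥ N`,
with `N` large, the tail of `t` sums to less than `1`, so every point of `K` receives mass at least
`t n` from the balls of some level `n`. Selecting disjoint groups of such balls and enlarging one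
cheapest ball of each group three times gives a genuine cover, and the factor `t n` is paid for by
lowering the exponent from `s` to `c`. Hence no fractional cover has `c`-weight below `1`, and by
duality (the M. Riesz extension theorem and the Riesz representation theorem) some probability
measure on `K` satisfies `μ(B_n^α(x,ε/3)) ≤ exp(-c S_nφ(x))` for all `x` and `n ≥ N`; its entropy is
at least `c`.

Conversely, if `P_μ^α(f,φ) > s`, then on a subset of `K` of positive measure the Bowen balls decay
uniformly at rate `s`, and the mass distribution principle bounds the covering quantities of `K`
from below at every rate `t < s`. Replacing the supremum of `S_nφ` over a ball by its value at a
point costs only a factor close to `1`, as `φ` is uniformly continuous and bounded away from `0`.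
-/

namespace AlphaBS

open scoped Topology

section FractionalCover

variable {ι β Y : Type*}

/-- A finitely supported weight `w` on the index set of a family `U` is a fractional cover of `K`
if the members of `U` containing any given point of `K` have total weight at least `1`. -/
def IsFractionalCover (U : ι → Set Y) (K : Set Y) (w : ι →₀ ℝ≥0) : Prop :=
  ∀ y ∈ K, 1 ≤ Finsupp.linearCombination ℝ≥0 (fun i => (U i).indicator (1 : Y → ℝ≥0) y) w

theorem linearCombination_indicator_one (U : ι → Set Y) (w : ι →₀ ℝ≥0) (y : Y) :
    Finsupp.linearCombination ℝ≥0 (fun i => (U i).indicator (1 : Y → ℝ≥0) y) w =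
      ∑ i ∈ w.support with y ∈ U i, w i := by
  simp [Finsupp.linearCombination_apply, Finsupp.sum, Finset.sum_filter, indicator_apply]

-- Take a maximal disjoint subfamily of `A` and let `sel` pick the cheapest element of each member.
theorem exists_disjoint_selection_sum_mul_le (I : Finset ι) (w a : ι → ℝ≥0) (A : β → Finset ι)
    (τ : β → ℝ≥0) (hτ : ∀ b, 0 < τ b) (hAI : ∀ b, A b ⊆ I) (hτA : ∀ b, τ b ≤ ∑ i ∈ A b, w i) :
    ∃ (u : Finset β) (sel : β → ι), (∀ b, sel b ∈ A b) ∧ Set.InjOn sel u ∧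
      (∀ b, ∃ b' ∈ u, (A b ∩ A b').Nonempty) ∧
      ∑ b ∈ u, τ b * a (sel b) ≤ ∑ i ∈ I, w i * a i := by
  have hA_ne : ∀ b, (A b).Nonempty := fun b =>
    Finset.nonempty_of_sum_ne_zero ((hτ b).trans_le (hτA b)).ne'
  choose sel sel_mem sel_min using fun b => (A b).exists_min_image a (hA_ne b)
  obtain ⟨u, -, hu_disj, hu_meet⟩ := Vitali.exists_disjoint_subfamily_covering_enlargement
    (fun b => (A b : Set ι)) univ 0 2 one_lt_two (fun _ _ => le_rfl) 0 (fun _ _ => le_rfl)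
    fun b _ => hA_ne b
  have sel_inj : Set.InjOn sel u := fun b hb b' hb' h =>
    hu_disj.elim hb hb' (Set.not_disjoint_iff.2 ⟨sel b, sel_mem b, h ▸ sel_mem b'⟩)
  have hu_fin : u.Finite := .of_finite_image
    (I.finite_toSet.subset (image_subset_iff.2 fun b _ => hAI b (sel_mem b))) sel_inj
  lift u to Finset β using hu_fin
  refine ⟨u, sel, sel_mem, sel_inj, fun b => ?_, ?_⟩
  · obtain ⟨b', hb', h, -⟩ := hu_meet b (mem_univ b)
    exact ⟨b', hb', by exact_mod_cast h⟩
  calc ∑ b ∈ u, τ b * a (sel b)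
      ≤ ∑ b ∈ u, ∑ i ∈ A b, w i * a i := by
        refine Finset.sum_le_sum fun b _ => ?_
        calc τ b * a (sel b) ≤ (∑ i ∈ A b, w i) * a (sel b) := by gcongr; exact hτA b
          _ = ∑ i ∈ A b, w i * a (sel b) := Finset.sum_mul ..
          _ ≤ ∑ i ∈ A b, w i * a i := by gcongr with i hi; exact sel_min b i hi
    _ = ∑ i ∈ u.biUnion A, w i * a i :=
        (Finset.sum_biUnion fun b hb b' hb' h =>
          Finset.disjoint_coe.1 (hu_disj hb hb' h)).symm
    _ ≤ ∑ i ∈ I, w i * a i :=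
        Finset.sum_le_sum_of_subset (Finset.biUnion_subset.2 fun b _ => hAI b)

theorem IsFractionalCover.exists_level {U : ι → Set Y} {K : Set Y} {w : ι →₀ ℝ≥0}
    (hw : IsFractionalCover U K w) (n : ι → ℕ) (t : ℕ → ℝ≥0)
    (ht : ∑ k ∈ w.support.image n, t k < 1) {y : Y} (hy : y ∈ K) :
    ∃ k, t k ≤ ∑ i ∈ w.support with n i = k ∧ y ∈ U i, w i := by
  have h_one_le : 1 ≤ ∑ k ∈ w.support.image n, ∑ i ∈ w.support with n i = k ∧ y ∈ U i, w i := by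
    have hmaps : ∀ i ∈ w.support.filter (y ∈ U ·), n i ∈ w.support.image n := fun i hi =>
      Finset.mem_image_of_mem n (Finset.mem_filter.1 hi).1
    simpa only [linearCombination_indicator_one, ← Finset.sum_fiberwise_of_maps_to hmaps,
      Finset.filter_filter, and_comm] using hw y hy
  obtain ⟨k, -, hk⟩ := Finset.exists_lt_of_sum_lt (ht.trans_le h_one_le)
  exact ⟨k, hk.le⟩

theorem IsFractionalCover.exists_finset_sum_mul_le {U : ι → Set Y} {K : Set Y} {w : ι →₀ ℝ≥0}
    (hw : IsFractionalCover U K w) (n : ι → ℕ) (t : ℕ → ℝ≥0) (ht_pos : ∀ k, 0 < t k)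
    (ht : ∑ k ∈ w.support.image n, t k < 1) (a : ι → ℝ≥0) :
    ∃ J : Finset ι, (∀ y ∈ K, ∃ i, ∃ j ∈ J, n i = n j ∧ y ∈ U i ∧ (U i ∩ U j).Nonempty) ∧
      ∑ j ∈ J, t (n j) * a j ≤ Finsupp.linearCombination ℝ≥0 a w := by
  let A : Y × ℕ → Finset ι := fun p => w.support.filter fun i => n i = p.2 ∧ p.1 ∈ U i
  obtain ⟨u, sel, sel_mem, sel_inj, hu_meet, hu_sum⟩ := exists_disjoint_selection_sum_mul_le
    w.support w a (fun p : {p : Y × ℕ // t p.2 ≤ ∑ i ∈ A p, w i} => A p) (fun p => t p.1.2)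
    (fun p => ht_pos p.1.2) (fun p => Finset.filter_subset _ _) fun p => p.2
  have mem_A : ∀ {p i}, i ∈ A p → n i = p.2 ∧ p.1 ∈ U i := fun h => (Finset.mem_filter.1 h).2
  refine ⟨u.image sel, fun y hy => ?_, ?_⟩
  · obtain ⟨k, hk⟩ := hw.exists_level n t ht hy
    obtain ⟨p, hp, i, hi⟩ := hu_meet ⟨(y, k), hk⟩
    obtain ⟨hik, hip⟩ := Finset.mem_inter.1 hi
    have hsel := mem_A (sel_mem p)
    exact ⟨i, sel p, Finset.mem_image_of_mem _ hp, (mem_A hip).1.trans hsel.1.symm,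
      (mem_A hik).2, p.1.1, (mem_A hip).2, hsel.2⟩
  · calc ∑ j ∈ u.image sel, t (n j) * a j = ∑ p ∈ u, t p.1.2 * a (sel p) := by
          rw [Finset.sum_image sel_inj]
          exact Finset.sum_congr rfl fun p _ => by rw [(mem_A (sel_mem p)).1]
      _ ≤ ∑ i ∈ w.support, w i * a i := hu_sum
      _ = Finsupp.linearCombination ℝ≥0 a w := by
          simp only [Finsupp.linearCombination_apply, Finsupp.sum, smul_eq_mul]

end FractionalCover

theorem eventually_forall_finset_sum_lt_one {t : ℕ → ℝ≥0} (ht : Summable t) :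
    ∀ᶠ N in atTop, ∀ S : Finset ℕ, (∀ k ∈ S, N ≤ k) → ∑ k ∈ S, t k < 1 := by
  obtain ⟨S₀, hS₀⟩ := (NNReal.summable_coe.2 ht).vanishing (Iio_mem_nhds one_pos)
  filter_upwards [eventually_gt_atTop (S₀.sup id)] with N hN S hS
  have hdisj : Disjoint S S₀ := Finset.disjoint_left.2 fun k hk hk₀ =>
    ((hS k hk).trans (Finset.le_sup (f := id) hk₀)).not_gt hN
  exact_mod_cast hS₀ S hdisj

section Duality

variable {ι Y : Type*} [TopologicalSpace Y]

/-- The convex cone of continuous functions `h` such that some weight on the index set of `U` has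
cost, with respect to `a`, at most its coverage plus `h` at every point. The functionals of mass one
that are nonnegative on it are the probability measures giving mass at most `a i` to each `U i`. -/
def coverCone (U : ι → Set Y) (a : ι → ℝ≥0) : PointedCone ℝ C(Y, ℝ) where
  carrier := {h | ∃ w : ι →₀ ℝ≥0, ∀ y, (Finsupp.linearCombination ℝ≥0 a w : ℝ) ≤
    h y + Finsupp.linearCombination ℝ≥0 (fun i => (U i).indicator (1 : Y → ℝ≥0) y) w}
  zero_mem' := ⟨0, fun y => by simp⟩
  add_mem' := by
    rintro g h ⟨v, hv⟩ ⟨w, hw⟩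
    refine ⟨v + w, fun y => ?_⟩
    simp only [map_add, NNReal.coe_add, ContinuousMap.add_apply]
    linarith [hv y, hw y]
  smul_mem' := by
    rintro (c : ℝ≥0) h ⟨w, hw⟩
    refine ⟨c • w, fun y => ?_⟩
    change _ ≤ (c : ℝ) * h y + _
    simpa [mul_add] using mul_le_mul_of_nonneg_left (hw y) c.2

theorem smul_one_mem_coverCone_nonneg {U : ι → Set Y} {a : ι → ℝ≥0}
    (ha : ∀ w, IsFractionalCover U univ w → 1 ≤ Finsupp.linearCombination ℝ≥0 a w) {c : ℝ}
    (hc : c • 1 ∈ coverCone U a) : 0 ≤ c := by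
  obtain ⟨w, hw⟩ := hc
  by_contra! hc_neg
  let b : ℝ≥0 := Finsupp.linearCombination ℝ≥0 a w + (-c).toNNReal
  have hb : 0 < b := add_pos_of_nonneg_of_pos zero_le (Real.toNNReal_pos.2 (neg_pos.2 hc_neg))
  have h_cover : IsFractionalCover U univ (b⁻¹ • w) := fun y _ => by
    rw [map_smul, smul_eq_mul, ← div_eq_inv_mul, one_le_div hb, ← NNReal.coe_le_coe,
      NNReal.coe_add, Real.coe_toNNReal _ (neg_nonneg.2 hc_neg.le)]
    simpa [add_comm c, ← sub_eq_add_neg] using hw y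
  have h_cost := ha _ h_cover
  rw [map_smul, smul_eq_mul, ← div_eq_inv_mul, one_le_div hb] at h_cost
  exact h_cost.not_gt (lt_add_of_pos_right _ (Real.toNNReal_pos.2 (neg_pos.2 hc_neg)))

variable [CompactSpace Y] [T2Space Y] [MeasurableSpace Y] [BorelSpace Y]

theorem exists_isProbabilityMeasure_forall_isOpen_le (L : C(Y, ℝ) →ₗ[ℝ] ℝ)
    (hL : ∀ g, 0 ≤ g → 0 ≤ L g) (hL_one : L 1 = 1) :
    ∃ ν : Measure Y, IsProbabilityMeasure ν ∧ ∀ (U : Set Y), IsOpen U → ∀ a : ℝ,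
      (∀ g : C(Y, ℝ), (∀ y, g y ≤ U.indicator 1 y) → L g ≤ a) → ν U ≤ ENNReal.ofReal a := by
  let Λ : CompactlySupportedContinuousMap Y ℝ →ₚ[ℝ] ℝ := PositiveLinearMap.mk₀
    { toFun := fun g => L g.toContinuousMap
      map_add' := fun g h => L.map_add g.toContinuousMap h.toContinuousMap
      map_smul' := fun c g => L.map_smul c g.toContinuousMap } fun g hg => hL _ hg
  let toCc := CompactlySupportedContinuousMap.continuousMapEquiv (α := Y) (β := ℝ)
  have hΛ : ∀ g, Λ (toCc g) = L g := fun _ => rfl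
  have h_univ : RealRMK.rieszMeasure Λ univ = 1 := by
    have h_le := RealRMK.rieszMeasure_le_of_eq_one Λ (f := toCc 1) (fun _ => zero_le_one)
      isCompact_univ fun _ _ => rfl
    have h_ge := RealRMK.le_rieszMeasure_tsupport_subset Λ (f := toCc 1)
      (fun _ => ⟨zero_le_one, le_rfl⟩) (subset_univ _)
    rw [hΛ, hL_one, ENNReal.ofReal_one] at h_le h_ge
    exact h_le.antisymm h_ge
  refine ⟨RealRMK.rieszMeasure Λ, ⟨h_univ⟩, fun U hU a ha => ?_⟩
  rw [hU.measure_eq_iSup_isCompact]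
  refine iSup₂_le fun C hCU => iSup_le fun hC => ?_
  obtain ⟨g, hgC, hgU, -, hg⟩ := exists_continuous_one_zero_of_isCompact hC hU.isClosed_compl
    (disjoint_compl_right_iff_subset.mpr hCU)
  have h_le : RealRMK.rieszMeasure Λ C ≤ ENNReal.ofReal (L g) :=
    RealRMK.rieszMeasure_le_of_eq_one Λ (f := toCc g) (fun y => (hg y).1) hC fun y hy => hgC hy
  refine h_le.trans (ENNReal.ofReal_le_ofReal (ha g fun y => ?_))
  by_cases hy : y ∈ U
  · simpa [hy] using (hg y).2
  · simpa [hy] using (hgU hy).le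

theorem exists_isProbabilityMeasure_forall_le {U : ι → Set Y}
    (hU : ∀ i, IsOpen (U i)) {a : ι → ℝ≥0}
    (ha : ∀ w, IsFractionalCover U univ w → 1 ≤ Finsupp.linearCombination ℝ≥0 a w) :
    ∃ ν : Measure Y, IsProbabilityMeasure ν ∧ ∀ i, ν (U i) ≤ a i := by
  have hone : (1 : C(Y, ℝ)) ≠ 0 := by
    have : Nonempty Y := by
      by_contra! hY
      simpa using ha 0 fun y => isEmptyElim y
    exact one_ne_zero
  let F : C(Y, ℝ) →ₗ.[ℝ] ℝ := LinearPMap.mkSpanSingleton 1 1 hone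
  have hF_nonneg : ∀ g : F.domain, (g : C(Y, ℝ)) ∈ coverCone U a → 0 ≤ F g := by
    rintro ⟨_, hg⟩ hg_mem
    obtain ⟨c, rfl⟩ := Submodule.mem_span_singleton.1 hg
    exact (smul_one_mem_coverCone_nonneg ha hg_mem).trans_eq
      ((LinearPMap.mkSpanSingleton'_apply ..).trans (mul_one c)).symm
  have hF_dense : ∀ g : C(Y, ℝ), ∃ h : F.domain, (h : C(Y, ℝ)) + g ∈ coverCone U a := fun g =>
    ⟨⟨‖g‖ • 1, Submodule.smul_mem _ _ (Submodule.mem_span_singleton_self _)⟩, 0, fun y => by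
      simpa using neg_le_iff_add_nonneg'.1 (g.neg_norm_le_apply y)⟩
  obtain ⟨L, hL_span, hL_cone⟩ := riesz_extension (coverCone U a) F hF_nonneg hF_dense
  have hL_one : L 1 = 1 := by
    have := hL_span ⟨1, Submodule.mem_span_singleton_self _⟩
    rwa [LinearPMap.mkSpanSingleton_apply] at this
  have hL_nonneg : ∀ g, 0 ≤ g → 0 ≤ L g := fun g hg => hL_cone g ⟨0, fun y => by simpa using hg y⟩
  obtain ⟨ν, hν, hνU⟩ := exists_isProbabilityMeasure_forall_isOpen_le L hL_nonneg hL_one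
  refine ⟨ν, hν, fun i => ?_⟩
  rw [← ENNReal.ofReal_coe_nnreal]
  refine hνU (U i) (hU i) (a i) fun g hg => ?_
  have h_mem : (a i : ℝ) • 1 - g ∈ coverCone U a :=
    ⟨Finsupp.single i 1, fun y => by
      have hgy : g y ≤ ((U i).indicator (1 : Y → ℝ≥0) y : ℝ≥0) := by
        simpa [indicator_apply, apply_ite] using hg y
      simpa [sub_add] using hgy⟩
  simpa [hL_one] using hL_cone _ h_mem

end Duality

theorem exists_isProbabilityMeasure_apply_eq_one_forall_le {ι Y : Type*}
    [TopologicalSpace Y] [T2Space Y] [MeasurableSpace Y] [BorelSpace Y] {K : Set Y}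
    (hK : IsCompact K) {U : ι → Set Y} (hU : ∀ i, IsOpen (U i)) {a : ι → ℝ≥0}
    (ha : ∀ w, IsFractionalCover U K w → 1 ≤ Finsupp.linearCombination ℝ≥0 a w) :
    ∃ μ : Measure Y, IsProbabilityMeasure μ ∧ μ K = 1 ∧ ∀ i, μ (U i) ≤ a i := by
  have : CompactSpace K := isCompact_iff_compactSpace.1 hK
  obtain ⟨ν, hν, hνU⟩ := exists_isProbabilityMeasure_forall_le
    (U := fun i => ((↑) : K → Y) ⁻¹' U i) (fun i => (hU i).preimage continuous_subtype_val)
    fun w hw => ha w fun y hy => hw ⟨y, hy⟩ (mem_univ _)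
  have h_val : Measurable ((↑) : K → Y) := measurable_subtype_coe
  refine ⟨ν.map (↑), Measure.isProbabilityMeasure_map h_val.aemeasurable, ?_, fun i => ?_⟩
  · rw [Measure.map_apply h_val hK.measurableSet, Subtype.coe_preimage_self, measure_univ]
  · exact (Measure.map_apply h_val (hU i).measurableSet).trans_le (hνU i)

section BowenBall

theorem bowenBall_mono {X : Type*} (d : X → X → ℝ) (f : X → X) (α : ℝ) (n : ℕ) (x : X) :
    Monotone (bowenBall d f α n x) := fun _ _ h _ hy i hi => (hy i hi).trans_le h

variable {X : Type*} [PseudoMetricSpace X] {f : X → X} {α δ ε : ℝ} {n : ℕ} {x y z : X}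

theorem mem_bowenBall_self (hε : 0 < ε) : x ∈ bowenBall dist f α n x ε := by
  simpa [bowenBall] using fun _ _ => hε

theorem mem_bowenBall_comm : y ∈ bowenBall dist f α n x ε ↔ x ∈ bowenBall dist f α n y ε := by
  simp only [bowenBall, mem_ofPred_eq, dist_comm]

theorem mem_bowenBall_add (hy : y ∈ bowenBall dist f α n x δ) (hz : z ∈ bowenBall dist f α n y ε) :
    z ∈ bowenBall dist f α n x (δ + ε) := fun i hi =>
  calc Real.exp (α * i) * dist (f^[i] x) (f^[i] z)
      ≤ Real.exp (α * i) * (dist (f^[i] x) (f^[i] y) + dist (f^[i] y) (f^[i] z)) := by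
        gcongr; exact dist_triangle _ _ _
    _ < δ + ε := by rw [mul_add]; exact add_lt_add (hy i hi) (hz i hi)

theorem mem_bowenBall_three_mul (hy : y ∈ bowenBall dist f α n x ε)
    (h : (bowenBall dist f α n x ε ∩ bowenBall dist f α n z ε).Nonempty) :
    y ∈ bowenBall dist f α n z (3 * ε) := by
  obtain ⟨p, hpx, hpz⟩ := h
  rw [show 3 * ε = ε + ε + ε by ring]
  exact mem_bowenBall_add (mem_bowenBall_add hpz (mem_bowenBall_comm.1 hpx)) hy

theorem bowenBall_subset_two_mul (hy : y ∈ bowenBall dist f α n x ε) :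
    bowenBall dist f α n x ε ⊆ bowenBall dist f α n y (2 * ε) := fun _ hz => by
  rw [two_mul]
  exact mem_bowenBall_add (mem_bowenBall_comm.1 hy) hz

theorem isOpen_bowenBall (hf : Continuous f) (α : ℝ) (n : ℕ) (x : X) (ε : ℝ) :
    IsOpen (bowenBall dist f α n x ε) := by
  simp only [bowenBall, ofPred_forall]
  exact (finite_Iio n).isOpen_biInter fun i _ =>
    isOpen_lt (continuous_const.mul (continuous_const.dist (hf.iterate i))) continuous_const

end BowenBall

section BirkhoffSum

variable {X : Type*} {f : X → X} {φ : X → ℝ} {m q : ℝ}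

theorem nat_mul_le_birk (hm : ∀ x, m ≤ φ x) (n : ℕ) (x : X) : n * m ≤ birk f φ n x := by
  simpa [birk] using Finset.card_nsmul_le_sum (Finset.range n) (fun j => φ (f^[j] x)) m
    fun _ _ => hm _

theorem birk_pos (hm0 : 0 < m) (hm : ∀ x, m ≤ φ x) {n : ℕ} (hn : 1 ≤ n) (x : X) :
    0 < birk f φ n x :=
  (mul_pos (Nat.cast_pos.2 hn) hm0).trans_le (nat_mul_le_birk hm n x)

theorem bddAbove_birk_image (hφ : BddAbove (range φ)) (n : ℕ) (A : Set X) :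
    BddAbove (birk f φ n '' A) := by
  obtain ⟨M, hM⟩ := hφ
  refine ⟨n * M, forall_mem_image.2 fun x _ => ?_⟩
  simpa [birk] using Finset.sum_le_card_nsmul (Finset.range n) (fun j => φ (f^[j] x)) M
    fun _ _ => hM (mem_range_self _)

variable [PseudoMetricSpace X]

theorem exists_pos_forall_dist_lt_le_mul (hφ : UniformContinuous φ)
    (hm0 : 0 < m) (hm : ∀ x, m ≤ φ x) (hq : 1 < q) :
    ∃ η > 0, ∀ x y, dist x y < η → φ y ≤ q * φ x := by
  obtain ⟨η, hη, h⟩ := Metric.uniformContinuous_iff.1 hφ ((q - 1) * m)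
    (mul_pos (sub_pos.2 hq) hm0)
  refine ⟨η, hη, fun x y hxy => ?_⟩
  have h_sub : φ y - φ x ≤ (q - 1) * φ x :=
    calc φ y - φ x ≤ dist (φ x) (φ y) := by rw [dist_comm]; exact le_abs_self _
      _ ≤ (q - 1) * m := (h hxy).le
      _ ≤ (q - 1) * φ x := mul_le_mul_of_nonneg_left (hm x) (sub_pos.2 hq).le
  linarith

theorem birk_le_mul_birk {α η : ℝ} (hα : 0 ≤ α) (hφ : ∀ x y, dist x y < η → φ y ≤ q * φ x)
    {n : ℕ} {x y : X} (hy : y ∈ bowenBall dist f α n x η) :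
    birk f φ n y ≤ q * birk f φ n x := by
  simp only [birk, Finset.mul_sum]
  refine Finset.sum_le_sum fun i hi => hφ _ _ ?_
  exact (le_mul_of_one_le_left dist_nonneg (Real.one_le_exp (by positivity))).trans_lt
    (hy i (Finset.mem_range.1 hi))

theorem birk_center_le_sSup (hφ : BddAbove (range φ)) {ε : ℝ} (hε : 0 < ε) (α : ℝ) (n : ℕ)
    (x : X) : birk f φ n x ≤ sSup (birk f φ n '' bowenBall dist f α n x ε) :=
  le_csSup (bddAbove_birk_image hφ n _) (mem_image_of_mem _ (mem_bowenBall_self hε))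

end BirkhoffSum

section CoveringQuantity

variable {X : Type*} {d : X → X → ℝ} {f : X → X} {φ : X → ℝ} {α s ε : ℝ} {N : ℕ} {K : Set X}

theorem Mpre_le_tsum {ι : Type*} [Countable ι] [Nonempty ι] (c : ι → X) (n : ι → ℕ)
    (hn : ∀ i, N ≤ n i) (hK : K ⊆ ⋃ i, bowenBall d f α (n i) (c i) ε) :
    Mpre d f φ α s ε N K ≤ ∑' i, ENNReal.ofReal
      (Real.exp (-s * sSup (birk f φ (n i) '' bowenBall d f α (n i) (c i) ε))) := by
  obtain ⟨g, hg⟩ := exists_injective_nat ι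
  have hg_inv := Function.leftInverse_invFun hg
  refine iInf_le_of_le (c ∘ Function.invFun g) <| iInf_le_of_le (n ∘ Function.invFun g) <|
    iInf_le_of_le (range g) <| iInf_le_of_le (range_nonempty g) <|
    iInf_le_of_le (forall_mem_range.2 fun i => hn _) <| iInf_le_of_le ?_ ?_
  · simpa [hg_inv _] using hK
  · rw [tsum_range (f := fun k => ENNReal.ofReal (Real.exp (-s * sSup (birk f φ
      ((n ∘ Function.invFun g) k) '' bowenBall d f α ((n ∘ Function.invFun g) k)
        ((c ∘ Function.invFun g) k) ε)))) hg]
    simp only [Function.comp_apply, hg_inv _, le_refl]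

theorem Mpre_mono : Monotone fun N => Mpre d f φ α s ε N K := fun _ _ h =>
  iInf_mono fun _ => iInf_mono fun _ => iInf_mono fun _ => iInf_mono fun _ =>
    iInf_mono' fun hm => ⟨fun i hi => h.trans (hm i hi), le_rfl⟩

theorem measure_le_Mpre [MeasurableSpace X] {μ : Measure X} {A : Set X} (hAK : A ⊆ K)
    (hμ : ∀ n ≥ N, ∀ x, μ (A ∩ bowenBall d f α n x ε) ≤
      ENNReal.ofReal (Real.exp (-s * sSup (birk f φ n '' bowenBall d f α n x ε)))) :
    μ A ≤ Mpre d f φ α s ε N K := by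
  refine le_iInf fun c => le_iInf fun n => le_iInf fun I => le_iInf fun _ => le_iInf fun hn =>
    le_iInf fun hcov => ?_
  have hA : A ⊆ ⋃ i ∈ I, A ∩ bowenBall d f α (n i) (c i) ε := by
    rw [← inter_iUnion₂]
    exact subset_inter subset_rfl (hAK.trans hcov)
  calc μ A ≤ ∑' i : I, μ (A ∩ bowenBall d f α (n i) (c i) ε) :=
        (measure_mono hA).trans (measure_biUnion_le μ I.to_countable _)
    _ ≤ _ := ENNReal.tsum_le_tsum fun i => hμ _ (hn i i.2) _

end CoveringQuantity

section Dimension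

variable {X : Type*} {d : X → X → ℝ} {f : X → X} {φ : X → ℝ} {α s ε c : ℝ} {K : Set X}

theorem dimBS_nonneg : 0 ≤ dimBS d f φ α K :=
  le_iSup₂_of_le 1 one_pos <| le_iInf₂ fun _ hs => le_iInf fun _ => EReal.coe_nonneg.2 hs

theorem exists_Mlim_ne_zero_of_lt_dimBS (hs : 0 ≤ s) (h : s < dimBS d f φ α K) :
    ∃ ε > 0, Mlim d f φ α s ε K ≠ 0 := by
  obtain ⟨ε, h⟩ := lt_iSup_iff.1 h
  obtain ⟨hε, h_crit⟩ := lt_iSup_iff.1 h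
  exact ⟨ε, hε, fun h0 => h_crit.not_ge (iInf₂_le_of_le s hs (iInf_le _ h0))⟩

theorem le_dimBS (hε : 0 < ε) (h : ∀ t, 0 ≤ t → t < c → Mlim d f φ α t ε K ≠ 0) :
    c ≤ dimBS d f φ α K :=
  le_iSup₂_of_le ε hε <| le_iInf₂ fun t ht => le_iInf fun h0 =>
    EReal.coe_le_coe_iff.2 (not_lt.1 fun htc => h t ht htc h0)

end Dimension

section CriticalExponent

variable {X : Type*} [PseudoMetricSpace X] {f : X → X} {φ : X → ℝ} {α s s' ε m : ℝ} {K : Set X}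

theorem ofReal_exp_mul_Mpre_le (hφ : BddAbove (range φ)) (hm0 : 0 ≤ m) (hm : ∀ x, m ≤ φ x)
    (hε : 0 < ε) (hss : s ≤ s') (N : ℕ) :
    ENNReal.ofReal (Real.exp ((s' - s) * (N * m))) * Mpre dist f φ α s' ε N K ≤
      Mpre dist f φ α s ε N K := by
  refine le_iInf fun c => le_iInf fun n => le_iInf fun I => le_iInf fun hI => le_iInf fun hn =>
    le_iInf fun hcov => ?_
  have h_term : ∀ i : I, ENNReal.ofReal (Real.exp ((s' - s) * (N * m))) * ENNReal.ofReal
      (Real.exp (-s' * sSup (birk f φ (n i) '' bowenBall dist f α (n i) (c i) ε))) ≤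
      ENNReal.ofReal
        (Real.exp (-s * sSup (birk f φ (n i) '' bowenBall dist f α (n i) (c i) ε))) := by
    intro i
    have h_sup : N * m ≤ sSup (birk f φ (n i) '' bowenBall dist f α (n i) (c i) ε) :=
      calc N * m ≤ n i * m := by gcongr; exact hn i i.2
        _ ≤ birk f φ (n i) (c i) := nat_mul_le_birk hm _ _
        _ ≤ _ := birk_center_le_sSup hφ hε α _ _
    rw [← ENNReal.ofReal_mul (Real.exp_pos _).le, ← Real.exp_add]
    refine ENNReal.ofReal_le_ofReal (Real.exp_le_exp.2 ?_)
    linarith [mul_le_mul_of_nonneg_left h_sup (sub_nonneg.2 hss)]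
  have := hI.to_subtype
  calc ENNReal.ofReal (Real.exp ((s' - s) * (N * m))) * Mpre dist f φ α s' ε N K
      ≤ ENNReal.ofReal (Real.exp ((s' - s) * (N * m))) * ∑' i : I, ENNReal.ofReal
        (Real.exp (-s' * sSup (birk f φ (n i) '' bowenBall dist f α (n i) (c i) ε))) := by
        gcongr
        exact Mpre_le_tsum (ι := I) (fun i => c i) (fun i => n i) (fun i => hn i i.2)
          (by rwa [biUnion_eq_iUnion] at hcov)
    _ ≤ _ := by rw [← ENNReal.tsum_mul_left]; exact ENNReal.tsum_le_tsum h_term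

theorem tendsto_Mpre_nhds_top (hφ : BddAbove (range φ)) (hm0 : 0 < m) (hm : ∀ x, m ≤ φ x)
    (hε : 0 < ε) (hss : s < s') (h : Mlim dist f φ α s' ε K ≠ 0) :
    Tendsto (fun N => Mpre dist f φ α s ε N K) atTop (𝓝 ⊤) := by
  obtain ⟨N₀, hN₀⟩ : ∃ N, Mpre dist f φ α s' ε N K ≠ 0 := by
    simpa [Mlim] using h
  have h_exp : Tendsto (fun N : ℕ => ENNReal.ofReal (Real.exp ((s' - s) * (N * m)))) atTop (𝓝 ⊤) :=
    ENNReal.tendsto_ofReal_atTop.comp <| Real.tendsto_exp_atTop.comp <|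
      (tendsto_natCast_atTop_atTop.atTop_mul_const hm0).const_mul_atTop (sub_pos.2 hss)
  have h_mul := ENNReal.Tendsto.mul_const (b := Mpre dist f φ α s' ε N₀ K) h_exp
    (Or.inl ENNReal.top_ne_zero)
  rw [ENNReal.top_mul hN₀] at h_mul
  refine tendsto_nhds_top_mono h_mul ?_
  filter_upwards [eventually_ge_atTop N₀] with N hN
  exact (mul_le_mul_right (Mpre_mono hN) _).trans
    (ofReal_exp_mul_Mpre_le hφ hm0.le hm hε hss.le N)

theorem Mpre_three_mul_le_linearCombination {c : ℝ} {N : ℕ} (hφ : BddAbove (range φ))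
    (hm : ∀ x, m ≤ φ x) (hε : 0 < ε) (hs : 0 ≤ s) (hcs : c ≤ s) (hK : K.Nonempty)
    (hN : ∀ S : Finset ℕ, (∀ k ∈ S, N ≤ k) →
      ∑ k ∈ S, (Real.exp (-(s - c) * m)).toNNReal ^ k < 1)
    {ι : Type*} {x : ι → X} {n : ι → ℕ} (hn : ∀ i, N ≤ n i) {w : ι →₀ ℝ≥0}
    (hw : IsFractionalCover (fun i => bowenBall dist f α (n i) (x i) ε) K w) :
    Mpre dist f φ α s (3 * ε) N K ≤ Finsupp.linearCombination ℝ≥0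
      (fun i => (Real.exp (-c * birk f φ (n i) (x i))).toNNReal) w := by
  obtain ⟨J, hJ_cover, hJ_sum⟩ := hw.exists_finset_sum_mul_le n
    (fun k => (Real.exp (-(s - c) * m)).toNNReal ^ k)
    (fun k => pow_pos (Real.toNNReal_pos.2 (Real.exp_pos _)) k)
    (hN _ (Finset.forall_mem_image.2 fun i _ => hn i))
    fun i => (Real.exp (-c * birk f φ (n i) (x i))).toNNReal
  have hKJ : K ⊆ ⋃ j : J, bowenBall dist f α (n j) (x j) (3 * ε) := fun y hy => by
    obtain ⟨i, j, hj, hij, hyi, h_meet⟩ := hJ_cover y hy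
    rw [hij] at hyi h_meet
    exact mem_iUnion.2 ⟨⟨j, hj⟩, mem_bowenBall_three_mul hyi h_meet⟩
  have : Nonempty J := by
    obtain ⟨y, hy⟩ := hK
    exact (mem_iUnion.1 (hKJ hy)).nonempty
  have h_term : ∀ j : J, ENNReal.ofReal (Real.exp
      (-s * sSup (birk f φ (n j) '' bowenBall dist f α (n j) (x j) (3 * ε)))) ≤
      ((Real.exp (-(s - c) * m)).toNNReal ^ n j *
        (Real.exp (-c * birk f φ (n j) (x j))).toNNReal : ℝ≥0) := by
    intro j
    have h_sup := birk_center_le_sSup (f := f) hφ (mul_pos three_pos hε) α (n j) (x j)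
    have h_lower := nat_mul_le_birk (f := f) hm (n j) (x j)
    rw [← Real.toNNReal_pow (Real.exp_pos _).le, ← Real.toNNReal_mul (by positivity),
      ← Real.exp_nat_mul, ← Real.exp_add]
    refine ENNReal.ofReal_le_ofReal (Real.exp_le_exp.2 ?_)
    linarith [mul_le_mul_of_nonneg_left h_sup hs,
      mul_le_mul_of_nonneg_left h_lower (sub_nonneg.2 hcs)]
  calc Mpre dist f φ α s (3 * ε) N K ≤ ∑' j : J, ENNReal.ofReal (Real.exp
        (-s * sSup (birk f φ (n j) '' bowenBall dist f α (n j) (x j) (3 * ε)))) :=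
        Mpre_le_tsum (fun j : J => x j) (fun j => n j) (fun j => hn j) hKJ
    _ ≤ ∑' j : J, (((Real.exp (-(s - c) * m)).toNNReal ^ n j *
        (Real.exp (-c * birk f φ (n j) (x j))).toNNReal : ℝ≥0) : ℝ≥0∞) :=
        ENNReal.tsum_le_tsum h_term
    _ ≤ _ := by
        rw [tsum_fintype, ← ENNReal.ofNNReal_finsetSum, ENNReal.coe_le_coe]
        exact (Finset.sum_coe_sort J _).trans_le hJ_sum

end CriticalExponent

section LocalEntropy

theorem ofReal_le_negLog_iff {t : ℝ≥0∞} (ht : t ≤ 1) {b : ℝ} :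
    ENNReal.ofReal b ≤ negLog t ↔ t ≤ ENNReal.ofReal (Real.exp (-b)) := by
  rcases eq_or_ne t 0 with rfl | h0
  · simp [negLog]
  have ht_top := ne_top_of_le_ne_top one_ne_top ht
  have h_log : Real.log t.toReal ≤ 0 :=
    Real.log_nonpos toReal_nonneg (ENNReal.toReal_le_of_le_ofReal zero_le_one (by simpa using ht))
  rw [negLog, if_neg h0, ENNReal.ofReal_le_ofReal_iff (neg_nonneg.2 h_log), le_neg,
    Real.log_le_iff_le_exp (ENNReal.toReal_pos h0 ht_top),
    ENNReal.le_ofReal_iff_toReal_le ht_top (Real.exp_pos _).le]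

theorem ofReal_le_negLog_div_iff {t : ℝ≥0∞} (ht : t ≤ 1) {s b : ℝ} (hs : 0 ≤ s) (hb : 0 < b) :
    ENNReal.ofReal s ≤ negLog t / ENNReal.ofReal b ↔ t ≤ ENNReal.ofReal (Real.exp (-s * b)) := by
  rw [ENNReal.le_div_iff_mul_le (Or.inl (ENNReal.ofReal_pos.2 hb).ne') (Or.inl ofReal_ne_top),
    ← ENNReal.ofReal_mul hs, ofReal_le_negLog_iff ht, neg_mul]

variable {X : Type*} [MeasurableSpace X] {d : X → X → ℝ} {f : X → X} {φ : X → ℝ} {α s m η : ℝ}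
  {μ : Measure X} [IsProbabilityMeasure μ] {K : Set X}

/-- The points whose Bowen balls of radius `ε` decay at exponential rate `s`, relative to the
Birkhoff sums of `φ` at the center, from time `N` on. -/
def decaySet (d : X → X → ℝ) (f : X → X) (φ : X → ℝ) (α : ℝ) (μ : Measure X) (s ε : ℝ) (N : ℕ) :
    Set X :=
  {x | ∀ n ≥ N, μ (bowenBall d f α n x ε) ≤ ENNReal.ofReal (Real.exp (-s * birk f φ n x))}

theorem ofReal_le_localBKphi (hs : 0 ≤ s) (hm0 : 0 < m) (hm : ∀ x, m ≤ φ x) {ε : ℝ} (hε : 0 < ε)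
    {N : ℕ} {x : X} (hx : x ∈ decaySet d f φ α μ s ε N) :
    ENNReal.ofReal s ≤ localBKphi d f φ α μ x := by
  refine le_iSup₂_of_le ε hε (le_liminf_of_le (by isBoundedDefault) ?_)
  filter_upwards [eventually_ge_atTop N, eventually_ge_atTop 1] with n hnN hn
  exact (ofReal_le_negLog_div_iff prob_le_one hs (birk_pos hm0 hm hn x)).2 (hx n hnN)

theorem exists_mem_decaySet (hs : 0 ≤ s) (hm0 : 0 < m) (hm : ∀ x, m ≤ φ x) {x : X}
    (hx : ENNReal.ofReal s < localBKphi d f φ α μ x) (η : ℝ) :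
    ∃ k N : ℕ, x ∈ decaySet d f φ α μ s (η / (k + 1)) N := by
  obtain ⟨ε, hx⟩ := lt_iSup_iff.1 hx
  obtain ⟨hε, hx⟩ := lt_iSup_iff.1 hx
  obtain ⟨N, hN⟩ := eventually_atTop.1 (eventually_lt_of_lt_liminf hx)
  obtain ⟨k, hk⟩ := exists_nat_gt (η / ε)
  have h_radius : η / (k + 1) ≤ ε := by
    rw [div_lt_iff₀ hε] at hk
    rw [div_le_iff₀ (by positivity)]
    linarith
  refine ⟨k, max N 1, fun n hn => ?_⟩
  have h_birk := birk_pos (f := f) hm0 hm ((le_max_right N 1).trans hn) x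
  exact (measure_mono (bowenBall_mono d f α n x h_radius)).trans <|
    (ofReal_le_negLog_div_iff prob_le_one hs h_birk).1 (hN n ((le_max_left N 1).trans hn)).le

theorem exists_measure_inter_decaySet_ne_zero (hs : 0 ≤ s) (hm0 : 0 < m) (hm : ∀ x, m ≤ φ x)
    (hη : 0 < η) (hK : ∀ᵐ x ∂μ, x ∈ K) (h : ENNReal.ofReal s < BKphi d f φ α μ) :
    ∃ ε > 0, ε ≤ η ∧ ∃ N, μ (K ∩ decaySet d f φ α μ s ε N) ≠ 0 := by
  suffices ∃ k N : ℕ, μ (K ∩ decaySet d f φ α μ s (η / (k + 1)) N) ≠ 0 by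
    obtain ⟨k, N, hkN⟩ := this
    exact ⟨η / (k + 1), by positivity, div_le_self hη.le (by simp), N, hkN⟩
  by_contra! h_null
  have h_ae : ∀ᵐ x ∂μ, ∀ k N : ℕ, x ∉ K ∩ decaySet d f φ α μ s (η / (k + 1)) N :=
    ae_all_iff.2 fun k => ae_all_iff.2 fun N => measure_eq_zero_iff_ae_notMem.1 (h_null k N)
  have h_local : ∀ᵐ x ∂μ, localBKphi d f φ α μ x ≤ ENNReal.ofReal s := by
    filter_upwards [h_ae, hK] with x hx hxK
    by_contra! hlt
    obtain ⟨k, N, hkN⟩ := exists_mem_decaySet hs hm0 hm hlt η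
    exact hx k N ⟨hxK, hkN⟩
  refine h.not_ge ?_
  calc BKphi d f φ α μ ≤ ∫⁻ _, ENNReal.ofReal s ∂μ := lintegral_mono_ae h_local
    _ = ENNReal.ofReal s := by simp

end LocalEntropy

section VariationalPrinciple

variable {X : Type*} [MeasurableSpace X] {f : X → X} {φ : X → ℝ} {α m : ℝ} {K : Set X}

theorem exists_isProbabilityMeasure_ofReal_le_BKphi [MetricSpace X] [BorelSpace X]
    (hf : Continuous f) (hφ : BddAbove (range φ)) (hm0 : 0 < m) (hm : ∀ x, m ≤ φ x)
    (hK : IsCompact K) (hKne : K.Nonempty) {c s ε : ℝ} (hc : 0 ≤ c) (hcs : c < s) (hε : 0 < ε)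
    (h : Mlim dist f φ α s ε K ≠ 0) :
    ∃ μ : Measure X, IsProbabilityMeasure μ ∧ μ K = 1 ∧
      ENNReal.ofReal c ≤ BKphi dist f φ α μ := by
  obtain ⟨r, hcr, hrs⟩ := exists_between hcs
  have h_ratio : (Real.exp (-(r - c) * m)).toNNReal < 1 := by
    rw [Real.toNNReal_lt_one, Real.exp_lt_one_iff, neg_mul, neg_lt_zero]
    exact mul_pos (sub_pos.2 hcr) hm0
  obtain ⟨N, h_tail, h_one⟩ :=
    ((eventually_forall_finset_sum_lt_one (NNReal.summable_geometric h_ratio)).and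
      ((tendsto_Mpre_nhds_top hφ hm0 hm hε hrs h).eventually_const_le one_lt_top)).exists
  have h_cover : ∀ w : X × Ici N →₀ ℝ≥0,
      IsFractionalCover (fun i => bowenBall dist f α i.2 i.1 (ε / 3)) K w →
      1 ≤ Finsupp.linearCombination ℝ≥0
        (fun i => (Real.exp (-c * birk f φ i.2 i.1)).toNNReal) w := fun w hw => by
    have h_le := Mpre_three_mul_le_linearCombination hφ hm (by positivity) (hc.trans hcr.le) hcr.le
      hKne h_tail (fun i : X × Ici N => i.2.2) hw
    rw [mul_div_cancel₀ ε three_ne_zero] at h_le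
    exact_mod_cast h_one.trans h_le
  have h_open : ∀ i : X × Ici N, IsOpen (bowenBall dist f α i.2 i.1 (ε / 3)) := fun i =>
    isOpen_bowenBall hf α i.2 i.1 (ε / 3)
  obtain ⟨μ, hμ, hμK, h_decay⟩ :=
    exists_isProbabilityMeasure_apply_eq_one_forall_le hK h_open h_cover
  have h_mem : ∀ x, x ∈ decaySet dist f φ α μ c (ε / 3) N := fun x n hn => h_decay (x, ⟨n, hn⟩)
  refine ⟨μ, hμ, hμK, ?_⟩
  calc ENNReal.ofReal c = ∫⁻ _, ENNReal.ofReal c ∂μ := by simp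
    _ ≤ BKphi dist f φ α μ := lintegral_mono fun x =>
        ofReal_le_localBKphi hc hm0 hm (by positivity) (h_mem x)

theorem dimBS_le_iSup_BKphi [MetricSpace X] [BorelSpace X]
    (hf : Continuous f) (hφ : BddAbove (range φ)) (hm0 : 0 < m) (hm : ∀ x, m ≤ φ x)
    (hK : IsCompact K) (hKne : K.Nonempty) :
    dimBS dist f φ α K ≤ ⨆ (μ : Measure X) (_ : IsProbabilityMeasure μ) (_ : μ K = 1),
      (BKphi dist f φ α μ : EReal) := by
  refine EReal.ge_of_forall_gt_iff_ge.1 fun c hc => ?_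
  rcases lt_or_ge c 0 with hc0 | hc0
  · obtain ⟨x, hx⟩ := hKne
    exact (EReal.coe_nonpos.2 hc0.le).trans <| (EReal.coe_ennreal_nonneg _).trans <|
      le_iSup₂_of_le (Measure.dirac x) inferInstance <| le_iSup_of_le
        (Measure.dirac_apply_of_mem hx) le_rfl
  obtain ⟨s, hcs, hs⟩ := EReal.lt_iff_exists_real_btwn.1 hc
  have hcs := EReal.coe_lt_coe_iff.1 hcs
  obtain ⟨ε, hε, h⟩ := exists_Mlim_ne_zero_of_lt_dimBS (hc0.trans hcs.le) hs
  obtain ⟨μ, hμ, hμK, hcμ⟩ := exists_isProbabilityMeasure_ofReal_le_BKphi hf hφ hm0 hm hK hKne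
    hc0 hcs hε h
  refine le_iSup₂_of_le μ hμ (le_iSup_of_le hμK ?_)
  calc (c : EReal) = (ENNReal.ofReal c : ℝ≥0∞) := by
        rw [EReal.coe_ennreal_ofReal, max_eq_left hc0]
    _ ≤ BKphi dist f φ α μ := EReal.coe_ennreal_le_coe_ennreal_iff.2 hcμ

variable [PseudoMetricSpace X] {μ : Measure X}

theorem measure_inter_decaySet_le_Mpre {q s t ε η : ℝ} (hα : 0 ≤ α)
    (hφ : ∀ x y, dist x y < η → φ y ≤ q * φ x) (hm0 : 0 < m) (hm : ∀ x, m ≤ φ x) (ht : 0 ≤ t)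
    (hts : t * q ≤ s) (hε : 0 < ε) (hεη : ε ≤ η) (N : ℕ) :
    μ (K ∩ decaySet dist f φ α μ s ε N) ≤ Mpre dist f φ α t (ε / 2) N K := by
  refine measure_le_Mpre inter_subset_left fun n hn x => ?_
  rcases (K ∩ decaySet dist f φ α μ s ε N ∩ bowenBall dist f α n x (ε / 2)).eq_empty_or_nonempty
    with h_empty | ⟨y, ⟨-, hy_decay⟩, hy⟩
  · simp [h_empty]
  have h_sub : bowenBall dist f α n x (ε / 2) ⊆ bowenBall dist f α n y ε := by
    simpa only [mul_div_cancel₀ ε two_ne_zero] using bowenBall_subset_two_mul hy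
  have h_sup : sSup (birk f φ n '' bowenBall dist f α n x (ε / 2)) ≤ q * birk f φ n y :=
    csSup_le (Nonempty.image _ ⟨x, mem_bowenBall_self (half_pos hε)⟩) <|
      forall_mem_image.2 fun z hz =>
        birk_le_mul_birk hα hφ (bowenBall_mono dist f α n y hεη (h_sub hz))
  have h_birk : 0 ≤ birk f φ n y := le_trans (by positivity) (nat_mul_le_birk hm n y)
  have h_exp : t * sSup (birk f φ n '' bowenBall dist f α n x (ε / 2)) ≤ s * birk f φ n y :=
    calc t * sSup (birk f φ n '' bowenBall dist f α n x (ε / 2))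
        ≤ t * (q * birk f φ n y) := mul_le_mul_of_nonneg_left h_sup ht
      _ = t * q * birk f φ n y := (mul_assoc _ _ _).symm
      _ ≤ s * birk f φ n y := mul_le_mul_of_nonneg_right hts h_birk
  calc μ (K ∩ decaySet dist f φ α μ s ε N ∩ bowenBall dist f α n x (ε / 2))
      ≤ μ (bowenBall dist f α n y ε) := measure_mono (inter_subset_right.trans h_sub)
    _ ≤ ENNReal.ofReal (Real.exp (-s * birk f φ n y)) := hy_decay n hn
    _ ≤ _ := ENNReal.ofReal_le_ofReal (Real.exp_le_exp.2 (by linarith))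

variable [IsProbabilityMeasure μ]

theorem le_dimBS_of_ofReal_lt_BKphi (hα : 0 ≤ α) (hφ : UniformContinuous φ) (hm0 : 0 < m)
    (hm : ∀ x, m ≤ φ x) (hK : ∀ᵐ x ∂μ, x ∈ K) {c : ℝ} (hc : 0 < c)
    (h : ENNReal.ofReal c < BKphi dist f φ α μ) : (c : EReal) ≤ dimBS dist f φ α K := by
  obtain ⟨s, hcs, hs⟩ : ∃ s, c < s ∧ ENNReal.ofReal s < BKphi dist f φ α μ := by
    obtain ⟨s, -, hcs, hs⟩ := ENNReal.lt_iff_exists_real_btwn.1 h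
    exact ⟨s, (ENNReal.ofReal_lt_ofReal_iff_of_nonneg hc.le).1 hcs, hs⟩
  have hs0 : 0 < s := hc.trans hcs
  obtain ⟨η, hη, h_osc⟩ :=
    exists_pos_forall_dist_lt_le_mul hφ hm0 hm ((one_lt_div hc).2 hcs)
  obtain ⟨ε, hε, hεη, N, hN⟩ := exists_measure_inter_decaySet_ne_zero hs0.le hm0 hm hη hK hs
  refine le_dimBS (half_pos hε) fun t ht htc h_zero => hN (nonpos_iff_eq_zero.1 ?_)
  have hts : t * (s / c) ≤ s :=
    (mul_le_mul_of_nonneg_right htc.le (by positivity)).trans_eq (mul_div_cancel₀ s hc.ne')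
  calc μ (K ∩ decaySet dist f φ α μ s ε N)
      ≤ Mpre dist f φ α t (ε / 2) N K :=
        measure_inter_decaySet_le_Mpre hα h_osc hm0 hm ht hts hε hεη N
    _ ≤ Mlim dist f φ α t (ε / 2) K := le_iSup (fun N => Mpre dist f φ α t (ε / 2) N K) N
    _ = 0 := h_zero

theorem BKphi_le_dimBS (hα : 0 ≤ α) (hφ : UniformContinuous φ) (hm0 : 0 < m)
    (hm : ∀ x, m ≤ φ x) (hK : ∀ᵐ x ∂μ, x ∈ K) :
    (BKphi dist f φ α μ : EReal) ≤ dimBS dist f φ α K := by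
  refine EReal.ge_of_forall_gt_iff_ge.1 fun c hc => ?_
  rcases le_or_gt c 0 with hc0 | hc0
  · exact (EReal.coe_nonpos.2 hc0).trans dimBS_nonneg
  refine le_dimBS_of_ofReal_lt_BKphi hα hφ hm0 hm hK hc0 ?_
  rwa [← EReal.coe_ennreal_lt_coe_ennreal_iff, EReal.coe_ennreal_ofReal, max_eq_left hc0.le]

end VariationalPrinciple

end AlphaBS

theorem stmt11_general {X : Type*} [MetricSpace X] [MeasurableSpace X] [BorelSpace X]
    {f : X → X} (hf : Continuous f) {φ : X → ℝ} (hφ : UniformContinuous φ)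
    (hφ_bdd : BddAbove (range φ)) {m : ℝ} (hm0 : 0 < m) (hm : ∀ x, m ≤ φ x)
    {K : Set X} (hK : IsCompact K) (hKne : K.Nonempty) {α : ℝ} (hα : 0 ≤ α) :
    dimBS dist f φ α K =
      ⨆ (μ : Measure X) (_ : IsProbabilityMeasure μ) (_ : μ K = 1),
        (BKphi dist f φ α μ : EReal) :=
  le_antisymm (dimBS_le_iSup_BKphi hf hφ_bdd hm0 hm hK hKne) <|
    iSup₂_le fun _ _ => iSup_le fun hμK =>
      BKphi_le_dimBS hα hφ hm0 hm ((mem_ae_iff_prob_eq_one hK.measurableSet).2 hμK)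

/-- variational principle: for a non-empty compact `K`,
`dim_BS^α(f,K,φ) = sup {P_μ^α(f,φ) : μ Borel probability, μ(K) = 1}`. -/
theorem stmt11 {X : Type*} [MetricSpace X] [CompactSpace X]
    [MeasurableSpace X] [BorelSpace X]
    (f : X → X) (hf : Continuous f)
    (φ : X → ℝ) (hφc : Continuous φ) (hφ : ∀ x, 0 < φ x)
    (K : Set X) (hK : IsCompact K) (hKne : K.Nonempty) (α : ℝ) (hα : 0 ≤ α) :
    dimBS dist f φ α K =
      ⨆ (μ : Measure X) (_ : IsProbabilityMeasure μ) (_ : μ K = 1),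
        (BKphi dist f φ α μ : EReal) := by
  obtain ⟨m, hm0, hm⟩ := isCompact_univ.exists_forall_le' hφc.continuousOn fun x _ => hφ x
  exact stmt11_general hf (CompactSpace.uniformContinuous_of_continuous hφc)
    (isCompact_range hφc).bddAbove hm0 (fun x => hm x (mem_univ x)) hK hKne hα

end
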